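/- Let i ≥ 1 and j ≥ 2 be integers and let r_i, r_j be independent random variables with r_i ∼ χ_{2i} and r_j ∼ χ_{2j}. Then E[r_i/r_j] ≤ √(i/(j−1)); explicitly, ∫_0^∞ ∫_0^∞ √(x/y) · ρ_i(x) ρ_j(y) dx dy ≤ √(i/(j−1)). -/

import Mathlib

open MeasureTheory Finset

/-- Density of the chi-squared distribution with `2m` degrees of freedom:
`ρ_m(q) = q^{m−1} e^{−q/2} / (2^m (m−1)!)` on `(0,∞)`. A random variable `r`
is χ_{2m}-distributed iff `r ≥ 0` and `r²` has this density; below `r = √x`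
with `x ∼ χ²_{2m}`. -/
noncomputable def chi2Density (m : ℕ) (q : ℝ) : ℝ :=
  q ^ (m - 1) * Real.exp (-q / 2) / (2 ^ m * Nat.factorial (m - 1))

/-!
If `x ∼ Γ(a, r)`, with shape `a` and rate `r`, then `E[x ^ s] = r ^ (-s) Γ(a + s) / Γ(a)`, and
log-convexity of `Γ` bounds the quotient `Γ(a + s) / Γ(a)` by `a ^ s` for `0 ≤ s ≤ 1`, and, if
`1 < a`, by `(a - 1) ^ s` for `-1 ≤ s ≤ 0`. By independence
`E[(x / y) ^ s] = E[x ^ s] E[y ^ (-s)]`. The law `χ²_{2m}` is `Γ(m, 1/2)`, so the ratio of two chi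
variables is the case `s = 1/2`.
-/

section GammaFunction

open Real

variable {a s : ℝ}

theorem Gamma_add_le_rpow_mul_Gamma (ha : 0 < a) (hs₀ : 0 ≤ s) (hs₁ : s ≤ 1) :
    Gamma (a + s) ≤ a ^ s * Gamma a := by
  rcases hs₀.eq_or_lt with rfl | hs_pos
  · simp
  rcases hs₁.eq_or_lt with rfl | hs_lt
  · rw [Gamma_add_one ha.ne', rpow_one]
  have gamma_pos := Gamma_pos_of_pos ha
  calc
    Gamma (a + s) = Gamma ((1 - s) * a + s * (a + 1)) := by ring_nf
    _ ≤ Gamma a ^ (1 - s) * Gamma (a + 1) ^ s :=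
      Gamma_mul_add_mul_le_rpow_Gamma_mul_rpow_Gamma ha (by linarith) (by linarith) hs_pos
        (by ring)
    _ = a ^ s * (Gamma a ^ (1 - s) * Gamma a ^ s) := by
      rw [Gamma_add_one ha.ne', mul_rpow ha.le gamma_pos.le]
      ring
    _ = a ^ s * Gamma a := by rw [← rpow_add gamma_pos, sub_add_cancel, rpow_one]

theorem Gamma_sub_le_rpow_neg_mul_Gamma (ha : 1 < a) (hs₀ : 0 ≤ s) (hs₁ : s ≤ 1) :
    Gamma (a - s) ≤ (a - 1) ^ (-s) * Gamma a := by
  have ha_sub : 0 < a - 1 := sub_pos.mpr ha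
  calc
    Gamma (a - s) = Gamma (a - 1 + (1 - s)) := by ring_nf
    _ ≤ (a - 1) ^ (1 - s) * Gamma (a - 1) :=
      Gamma_add_le_rpow_mul_Gamma ha_sub (by linarith) (by linarith)
    _ = (a - 1) ^ (-s) * ((a - 1) * Gamma (a - 1)) := by
      rw [sub_eq_neg_add 1 s, rpow_add_one ha_sub.ne']
      ring
    _ = (a - 1) ^ (-s) * Gamma a := by rw [← Gamma_add_one ha_sub.ne', sub_add_cancel]

end GammaFunction

section GammaDistribution

open Real ProbabilityTheory

variable {a b r t s : ℝ}

theorem measurable_gammaPDF (a r : ℝ) : Measurable (gammaPDF a r) :=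
  (measurable_gammaPDFReal a r).ennreal_ofReal

theorem ae_nonneg_gammaMeasure (a r : ℝ) : ∀ᵐ x ∂gammaMeasure a r, 0 ≤ x := by
  rw [gammaMeasure, ae_withDensity_iff (measurable_gammaPDF a r)]
  filter_upwards with x hx
  contrapose! hx
  exact gammaPDF_of_neg hx

theorem integral_gammaMeasure {E : Type*} [NormedAddCommGroup E] [NormedSpace ℝ E]
    (ha : 0 < a) (hr : 0 < r) (f : ℝ → E) :
    ∫ x, f x ∂gammaMeasure a r = ∫ x in Set.Ioi 0, gammaPDFReal a r x • f x := by
  have toReal_pdf (x : ℝ) : (gammaPDF a r x).toReal = gammaPDFReal a r x :=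
    ENNReal.toReal_ofReal (gammaPDFReal_nonneg ha hr x)
  have pdf_smul_eq_zero (x : ℝ) (hx : x ∉ Set.Ici 0) : gammaPDFReal a r x • f x = 0 := by
    rw [gammaPDFReal, if_neg (Set.mem_Ici.not.mp hx), zero_smul]
  rw [gammaMeasure, integral_withDensity_eq_integral_toReal_smul (measurable_gammaPDF a r)
    (ae_of_all _ fun _ ↦ ENNReal.ofReal_lt_top)]
  simp only [toReal_pdf]
  rw [← integral_Ici_eq_integral_Ioi, setIntegral_eq_integral_of_forall_compl_eq_zero
    pdf_smul_eq_zero]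

theorem integral_rpow_gammaMeasure (ha : 0 < a) (hr : 0 < r) (has : 0 < a + s) :
    ∫ x, x ^ s ∂gammaMeasure a r = r ^ (-s) * (Gamma (a + s) / Gamma a) := by
  have integrand_eq : ∀ x ∈ Set.Ioi (0 : ℝ), gammaPDFReal a r x • x ^ s =
      r ^ a / Gamma a * (x ^ (a + s - 1) * exp (-(r * x))) := by
    intro x (hx : 0 < x)
    rw [gammaPDFReal, if_pos hx.le, smul_eq_mul, add_sub_right_comm, rpow_add hx]
    ring
  rw [integral_gammaMeasure ha hr, setIntegral_congr_fun measurableSet_Ioi integrand_eq,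
    integral_const_mul, integral_rpow_mul_exp_neg_mul_Ioi has hr, one_div, inv_rpow hr.le,
    ← rpow_neg hr.le]
  calc
    r ^ a / Gamma a * (r ^ (-(a + s)) * Gamma (a + s))
      = r ^ a * r ^ (-(a + s)) * (Gamma (a + s) / Gamma a) := by ring
    _ = r ^ (-s) * (Gamma (a + s) / Gamma a) := by rw [← rpow_add hr]; ring_nf

theorem integral_rpow_gammaMeasure_le (ha : 0 < a) (hr : 0 < r) (hs₀ : 0 ≤ s) (hs₁ : s ≤ 1) :
    ∫ x, x ^ s ∂gammaMeasure a r ≤ (a / r) ^ s := by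
  rw [integral_rpow_gammaMeasure ha hr (by linarith), div_rpow ha.le hr.le, rpow_neg hr.le,
    div_eq_inv_mul (a ^ s)]
  gcongr
  exact (div_le_iff₀ (Gamma_pos_of_pos ha)).mpr (Gamma_add_le_rpow_mul_Gamma ha hs₀ hs₁)

theorem integral_rpow_neg_gammaMeasure_le (ha : 1 < a) (hr : 0 < r) (hs₀ : 0 ≤ s)
    (hs₁ : s ≤ 1) : ∫ x, x ^ (-s) ∂gammaMeasure a r ≤ (r / (a - 1)) ^ s := by
  have ha_pos : 0 < a := by linarith
  have ha_sub : 0 < a - 1 := sub_pos.mpr ha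
  rw [integral_rpow_gammaMeasure ha_pos hr (by linarith), neg_neg, div_rpow hr.le ha_sub.le,
    div_eq_mul_inv (r ^ s), ← rpow_neg ha_sub.le, ← sub_eq_add_neg]
  gcongr
  exact (div_le_iff₀ (Gamma_pos_of_pos ha_pos)).mpr (Gamma_sub_le_rpow_neg_mul_Gamma ha hs₀ hs₁)

theorem integral_integral_div_rpow_gammaMeasure (a b r t s : ℝ) :
    ∫ x, ∫ y, (x / y) ^ s ∂gammaMeasure b t ∂gammaMeasure a r =
      (∫ x, x ^ s ∂gammaMeasure a r) * ∫ y, y ^ (-s) ∂gammaMeasure b t := by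
  rw [← integral_mul_const]
  refine integral_congr_ae ?_
  filter_upwards [ae_nonneg_gammaMeasure a r] with x hx
  rw [← integral_const_mul]
  refine integral_congr_ae ?_
  filter_upwards [ae_nonneg_gammaMeasure b t] with y hy
  rw [div_rpow hx hy, rpow_neg hy, div_eq_mul_inv]

theorem expectation_ratio_chi_le_general (ha : 0 < a) (hb : 1 < b) (hr : 0 < r) (ht : 0 < t)
    (hs₀ : 0 ≤ s) (hs₁ : s ≤ 1) :
    ∫ x, ∫ y, (x / y) ^ s ∂gammaMeasure b t ∂gammaMeasure a r ≤
      (t / r * (a / (b - 1))) ^ s := by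
  calc
    ∫ x, ∫ y, (x / y) ^ s ∂gammaMeasure b t ∂gammaMeasure a r
      = (∫ x, x ^ s ∂gammaMeasure a r) * ∫ y, y ^ (-s) ∂gammaMeasure b t :=
      integral_integral_div_rpow_gammaMeasure a b r t s
    _ ≤ (a / r) ^ s * (t / (b - 1)) ^ s := by
      have moment_nonneg : 0 ≤ ∫ y, y ^ (-s) ∂gammaMeasure b t :=
        integral_nonneg_of_ae <| (ae_nonneg_gammaMeasure b t).mono fun y hy ↦ rpow_nonneg hy _
      gcongr
      · exact integral_rpow_gammaMeasure_le ha hr hs₀ hs₁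
      · exact integral_rpow_neg_gammaMeasure_le hb ht hs₀ hs₁
    _ = (t / r * (a / (b - 1))) ^ s := by
      rw [← mul_rpow (div_nonneg ha.le hr.le) (div_nonneg ht.le (sub_pos.mpr hb).le),
        div_mul_div_comm, div_mul_div_comm, mul_comm a t]

end GammaDistribution

section ChiSquared

open ProbabilityTheory

theorem gammaPDFReal_natCast_half {m : ℕ} (hm : 1 ≤ m) {q : ℝ} (hq : 0 ≤ q) :
    gammaPDFReal m (1 / 2) q = chi2Density m q := by
  obtain ⟨k, rfl⟩ := Nat.exists_eq_add_of_le' hm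
  have exponent_eq : ((k + 1 : ℕ) : ℝ) - 1 = k := by push_cast; ring
  rw [gammaPDFReal, if_pos hq, exponent_eq, Real.rpow_natCast, Real.rpow_natCast, Nat.cast_add_one,
    Real.Gamma_nat_eq_factorial, chi2Density, Nat.add_sub_cancel, one_div_pow,
    show -(1 / 2 * q) = -q / 2 by ring]
  ring

theorem integral_gammaMeasure_natCast_half {E : Type*} [NormedAddCommGroup E] [NormedSpace ℝ E]
    {m : ℕ} (hm : 1 ≤ m) (f : ℝ → E) :
    ∫ x, f x ∂gammaMeasure m (1 / 2) = ∫ x in Set.Ioi 0, chi2Density m x • f x := by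
  rw [integral_gammaMeasure (Nat.cast_pos.mpr hm) one_half_pos]
  refine setIntegral_congr_fun measurableSet_Ioi fun x hx ↦ ?_
  rw [gammaPDFReal_natCast_half hm (Set.mem_Ioi.mp hx).le]

theorem integral_integral_mul_chi2Density {i j : ℕ} (hi : 1 ≤ i) (hj : 1 ≤ j)
    (f : ℝ → ℝ → ℝ) :
    ∫ x in Set.Ioi 0, ∫ y in Set.Ioi 0, f x y * (chi2Density i x * chi2Density j y) =
      ∫ x, ∫ y, f x y ∂gammaMeasure j (1 / 2) ∂gammaMeasure i (1 / 2) := by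
  simp only [integral_gammaMeasure_natCast_half hi, integral_gammaMeasure_natCast_half hj,
    smul_eq_mul, ← integral_const_mul]
  congr! 4
  ring

end ChiSquared

theorem expectation_ratio_chi_le (i j : ℕ) (hi : 1 ≤ i) (hj : 2 ≤ j) :
    (∫ x in Set.Ioi (0 : ℝ), ∫ y in Set.Ioi (0 : ℝ),
        Real.sqrt (x / y) * (chi2Density i x * chi2Density j y)) ≤
      Real.sqrt ((i : ℝ) / ((j : ℝ) - 1)) := by
  rw [integral_integral_mul_chi2Density hi (one_le_two.trans hj) fun x y ↦ √(x / y)]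
  simpa [Real.sqrt_eq_rpow] using expectation_ratio_chi_le_general (a := i) (b := j)
    (Nat.cast_pos.mpr hi) (Nat.one_lt_cast.mpr hj) one_half_pos one_half_pos
    one_half_pos.le one_half_lt_one.le
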